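/- Let N : V → ℂ^δ cover a truncated normal form on V with respect to I, and let B ⊆ W = {f ∈ V : x_i·f ∈ V for i = 1,…,n} be a δ-dimensional subspace such that N|_B : B → ℂ^δ is bijective. For each i = 1,…,n define M_{x_i} : B → B by M_{x_i}(b) = (N|_B)^{-1}(N(x_i·b)). Then, with φ : B → R/I the map sending b to b + I, φ is a ℂ-linear isomorphism and φ(M_{x_i}(b)) = (x_i + I)·φ(b) for every b ∈ B; that is, M_{x_i} is the matrix of multiplication by x_i on R/I in the basis B. -/

import Mathlib

/-!
Since `ker N = I ∩ V`, two elements of `V` have the same image under `N` exactly when they are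
congruent modulo `I`. The target `B₀` of a truncated normal form meets `I` trivially, and as
`dim B₀ = dim R ⧸ I` it is a complement of `I`; hence `V + I = R`, and `N` induces an isomorphism
from `R ⧸ I` onto its image. Under it `N|_B` corresponds to `φ : B → R ⧸ I`, and
`N (M b) = N (xᵢ b)` says that `M b` and `xᵢ b` have the same class.
-/

open MvPolynomial

/-- A truncated normal form (TNF) on `V` w.r.t. `I`. -/
structure IsTNF (n δ : ℕ) (I : Ideal (MvPolynomial (Fin n) ℂ))
    (V B : Submodule ℂ (MvPolynomial (Fin n) ℂ)) (𝒩 : V →ₗ[ℂ] B) : Prop where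
  hBV : B ≤ V
  hdim : Module.finrank ℂ B = δ
  hmul : ∀ b ∈ B, ∀ i : Fin n, MvPolynomial.X i * b ∈ V
  hsurj : Function.Surjective 𝒩
  hker : LinearMap.ker 𝒩 = Submodule.comap V.subtype (Submodule.restrictScalars ℂ I)
  hid : ∀ v : V, (v : MvPolynomial (Fin n) ℂ) ∈ B →
    ((𝒩 v : B) : MvPolynomial (Fin n) ℂ) = (v : MvPolynomial (Fin n) ℂ)

/-- `N : V → ℂ^δ` covers a TNF. -/
def CoversTNF (n δ : ℕ) (I : Ideal (MvPolynomial (Fin n) ℂ))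
    (V : Submodule ℂ (MvPolynomial (Fin n) ℂ)) (N : V →ₗ[ℂ] (Fin δ → ℂ)) : Prop :=
  ∃ (B₀ : Submodule ℂ (MvPolynomial (Fin n) ℂ)) (𝒩₀ : V →ₗ[ℂ] B₀)
    (P : B₀ ≃ₗ[ℂ] (Fin δ → ℂ)), IsTNF n δ I V B₀ 𝒩₀ ∧ ∀ v : V, N v = P (𝒩₀ v)

section Ring

variable {K A E : Type*} [CommRing K] [Ring A] [Algebra K A] [AddCommGroup E] [Module K E]
  {I : Ideal A} [I.IsTwoSided] {V B : Submodule K A} {N : V →ₗ[K] E}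

theorem map_eq_map_iff_quotientMk_eq
    (hker : LinearMap.ker N = (I.restrictScalars K).comap V.subtype) (v w : V) :
    N v = N w ↔ Ideal.Quotient.mk I (v : A) = Ideal.Quotient.mk I (w : A) := by
  rw [Ideal.Quotient.eq, ← LinearMap.sub_mem_ker_iff, hker]
  rfl

theorem injective_quotientMk_of_injective_comp_inclusion
    (hker : LinearMap.ker N = (I.restrictScalars K).comap V.subtype) (hBV : B ≤ V)
    (hinj : Function.Injective (N ∘ₗ Submodule.inclusion hBV)) :
    Function.Injective (fun b : B => Ideal.Quotient.mk I (b : A)) := fun _ _ hbc =>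
  hinj ((map_eq_map_iff_quotientMk_eq hker _ _).2 hbc)

theorem surjective_quotientMk_of_surjective_comp_inclusion
    (hker : LinearMap.ker N = (I.restrictScalars K).comap V.subtype)
    (hVI : Codisjoint V (I.restrictScalars K)) (hBV : B ≤ V)
    (hsurj : Function.Surjective (N ∘ₗ Submodule.inclusion hBV)) :
    Function.Surjective (fun b : B => Ideal.Quotient.mk I (b : A)) := by
  intro q
  obtain ⟨f, rfl⟩ := Ideal.Quotient.mk_surjective q
  obtain ⟨v, g, hv, hg, rfl⟩ := Submodule.codisjoint_iff_exists_add_eq.1 hVI f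
  obtain ⟨b, hb⟩ := hsurj (N ⟨v, hv⟩)
  have hbv : Ideal.Quotient.mk I (b : A) = Ideal.Quotient.mk I v :=
    (map_eq_map_iff_quotientMk_eq hker _ _).1 hb
  have hg0 : Ideal.Quotient.mk I g = 0 := Ideal.Quotient.eq_zero_iff_mem.2 hg
  exact ⟨b, by simp only [hbv, map_add, hg0, add_zero]⟩

theorem stmt13_general
    (hker : LinearMap.ker N = (I.restrictScalars K).comap V.subtype)
    (hVI : Codisjoint V (I.restrictScalars K)) (hBV : B ≤ V)
    (hbij : Function.Bijective (N ∘ₗ Submodule.inclusion hBV))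
    {a : A} (ha : ∀ b ∈ B, a * b ∈ V) {M : B → B}
    (hM : ∀ b : B, (N ∘ₗ Submodule.inclusion hBV) (M b) = N ⟨a * b, ha b b.2⟩) :
    Function.Bijective (fun b : B => Ideal.Quotient.mk I (b : A)) ∧
      ∀ b : B, Ideal.Quotient.mk I (M b : A) =
        Ideal.Quotient.mk I a * Ideal.Quotient.mk I (b : A) := by
  refine ⟨⟨injective_quotientMk_of_injective_comp_inclusion hker hBV hbij.injective,
    surjective_quotientMk_of_surjective_comp_inclusion hker hVI hBV hbij.surjective⟩, fun b => ?_⟩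
  rw [← map_mul]
  exact (map_eq_map_iff_quotientMk_eq hker _ _).1 (hM b)

end Ring

theorem codisjoint_ker_of_disjoint_of_finrank_eq {K M M' : Type*} [DivisionRing K]
    [AddCommGroup M] [Module K M] [AddCommGroup M'] [Module K M'] [FiniteDimensional K M']
    {f : M →ₗ[K] M'} {P : Submodule K M} (hdisj : Disjoint P (LinearMap.ker f))
    (hdim : Module.finrank K P = Module.finrank K M') : Codisjoint P (LinearMap.ker f) := by
  have hinj : Function.Injective (f.domRestrict P) := LinearMap.injective_domRestrict_iff.2 hdisj
  have : FiniteDimensional K P := FiniteDimensional.of_injective _ hinj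
  have hsurj : Function.Surjective (f.domRestrict P) :=
    (LinearMap.injective_iff_surjective_of_finrank_eq_finrank hdim).1 hinj
  refine Submodule.codisjoint_iff_exists_add_eq.2 fun z => ?_
  obtain ⟨p, hp : f p = f z⟩ := hsurj (f z)
  exact ⟨p, z - p, p.2, by rw [LinearMap.mem_ker, map_sub, hp, sub_self], add_sub_cancel _ _⟩

section TNF

variable {n δ : ℕ} {I : Ideal (MvPolynomial (Fin n) ℂ)}
  {V : Submodule ℂ (MvPolynomial (Fin n) ℂ)}

theorem IsTNF.disjoint_ideal {B : Submodule ℂ (MvPolynomial (Fin n) ℂ)} {𝒩 : V →ₗ[ℂ] B}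
    (h : IsTNF n δ I V B 𝒩) : Disjoint B (I.restrictScalars ℂ) := by
  refine Submodule.disjoint_def.2 fun b hbB hbI => ?_
  have hb : (⟨b, h.hBV hbB⟩ : V) ∈ LinearMap.ker 𝒩 := h.hker ▸ hbI
  calc b = 𝒩 ⟨b, h.hBV hbB⟩ := (h.hid ⟨b, h.hBV hbB⟩ hbB).symm
    _ = 0 := by rw [LinearMap.mem_ker.1 hb, Submodule.coe_zero]

theorem IsTNF.codisjoint_ideal [FiniteDimensional ℂ (MvPolynomial (Fin n) ℂ ⧸ I)]
    {B : Submodule ℂ (MvPolynomial (Fin n) ℂ)} {𝒩 : V →ₗ[ℂ] B} (h : IsTNF n δ I V B 𝒩)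
    (hδ : Module.finrank ℂ (MvPolynomial (Fin n) ℂ ⧸ I) = δ) :
    Codisjoint B (I.restrictScalars ℂ) := by
  have hker : LinearMap.ker (Ideal.Quotient.mkₐ ℂ I).toLinearMap = I.restrictScalars ℂ := by
    ext f
    exact Ideal.Quotient.eq_zero_iff_mem
  rw [← hker]
  exact codisjoint_ker_of_disjoint_of_finrank_eq (hker ▸ h.disjoint_ideal) (h.hdim.trans hδ.symm)

theorem CoversTNF.ker_eq {N : V →ₗ[ℂ] (Fin δ → ℂ)} (hN : CoversTNF n δ I V N) :
    LinearMap.ker N = (I.restrictScalars ℂ).comap V.subtype := by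
  obtain ⟨B₀, 𝒩₀, P, h, hP⟩ := hN
  have hcomp : N = P.toLinearMap ∘ₗ 𝒩₀ := LinearMap.ext hP
  rw [hcomp, LinearEquiv.ker_comp, h.hker]

theorem CoversTNF.codisjoint_ideal [FiniteDimensional ℂ (MvPolynomial (Fin n) ℂ ⧸ I)]
    {N : V →ₗ[ℂ] (Fin δ → ℂ)} (hN : CoversTNF n δ I V N)
    (hδ : Module.finrank ℂ (MvPolynomial (Fin n) ℂ ⧸ I) = δ) :
    Codisjoint V (I.restrictScalars ℂ) := by
  obtain ⟨_, _, _, h, _⟩ := hN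
  exact (h.codisjoint_ideal hδ).mono_left h.hBV

end TNF

/-- if `N` covers a TNF and `B ⊆ W` is `δ`-dimensional with `N|_B`
bijective, then `M_{x_i} = (N|_B)⁻¹ ∘ N(x_i·) : B → B` represents multiplication by
`x_i` on `R/I` via the isomorphism `φ : B → R/I`, `b ↦ b + I`. -/
theorem stmt13 (n δ : ℕ) (I : Ideal (MvPolynomial (Fin n) ℂ))
    (hfin : FiniteDimensional ℂ (MvPolynomial (Fin n) ℂ ⧸ I))
    (hδ : Module.finrank ℂ (MvPolynomial (Fin n) ℂ ⧸ I) = δ)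
    (V : Submodule ℂ (MvPolynomial (Fin n) ℂ))
    (N : V →ₗ[ℂ] (Fin δ → ℂ)) (hN : CoversTNF n δ I V N)
    (B : Submodule ℂ (MvPolynomial (Fin n) ℂ))
    (hBW : B ≤ V ⊓ ⨅ i : Fin n, Submodule.comap (LinearMap.mulLeft ℂ (X i)) V)
    (hBdim : Module.finrank ℂ B = δ) (hBV : B ≤ V)
    (hbij : Function.Bijective (N ∘ₗ Submodule.inclusion hBV))
    (i : Fin n) (Mxi : B →ₗ[ℂ] B)
    (hMxi : ∀ b : B, ∀ hb : MvPolynomial.X i * (b : MvPolynomial (Fin n) ℂ) ∈ V,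
      (N ∘ₗ Submodule.inclusion hBV) (Mxi b)
        = N (⟨MvPolynomial.X i * (b : MvPolynomial (Fin n) ℂ), hb⟩ : V)) :
    Function.Bijective
        (fun b : B => Ideal.Quotient.mk I ((b : MvPolynomial (Fin n) ℂ))) ∧
      ∀ b : B,
        Ideal.Quotient.mk I ((Mxi b : B) : MvPolynomial (Fin n) ℂ)
          = Ideal.Quotient.mk I (MvPolynomial.X i)
            * Ideal.Quotient.mk I ((b : MvPolynomial (Fin n) ℂ)) := by
  have hXB (b) (hb : b ∈ B) : X i * b ∈ V := (Submodule.mem_iInf _).1 (hBW hb).2 i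
  exact stmt13_general hN.ker_eq (hN.codisjoint_ideal hδ) hBV hbij hXB fun b => hMxi b (hXB b b.2)
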